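/- arXiv:2007.12225 — 5 statements merged into one kernel-verified Lean document; each statement's English description precedes it below -/
import Mathlib

section
/- (Appendix A, concluding chain) Let W be a channel from 𝒳 to 𝒴, let Q_X be a pmf on 𝒳, let R ≥ 0, and let Q_{XX'} be a pmf on 𝒳 × 𝒳. Define Ξ(Q_{XX'},R) = sup_{ρ ≥ 0} min over conditional pmfs Q_{Y|XX'} of { −∑_{x,x',y} Q_{XX'Y}(x,x',y) log W(y|x) − H_Q(Y|X,X') + ρ ( a_{g_ML}(R,Q_Y) − ∑_{x',y} Q_{X'Y}(x',y) log W(y|x') ) }, where Q_{XX'Y} = Q_{XX'} · Q_{Y|XX'} and Q_Y, Q_{X'Y} are its marginals. Then Ξ(Q_{XX'},R) ≤ Θ(Q_{XX'},R). -/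
open Real BigOperators Filter

namespace EE

variable {𝒳 𝒴 : Type*} [Fintype 𝒳] [Fintype 𝒴]

/-- `p` is a probability mass function on a finite type. -/
def IsPMF {α : Type*} [Fintype α] (p : α → ℝ) : Prop :=
  (∀ a, 0 ≤ p a) ∧ ∑ a, p a = 1

/-- `p` is a strictly positive probability mass function on a finite type. -/
def IsPosPMF {α : Type*} [Fintype α] (p : α → ℝ) : Prop :=
  (∀ a, 0 < p a) ∧ ∑ a, p a = 1

/-- A channel from `𝒳` to `𝒴`: every row `W (·|x)` is a strictly positive pmf on `𝒴`. -/
def IsChannel (W : 𝒳 → 𝒴 → ℝ) : Prop := ∀ x, IsPosPMF (W x)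

/-- A joint pmf on `𝒳 × 𝒴`, in curried form. -/
def IsJointPMF (Q : 𝒳 → 𝒴 → ℝ) : Prop :=
  (∀ x y, 0 ≤ Q x y) ∧ ∑ x, ∑ y, Q x y = 1

/-- A joint pmf on `𝒳 × 𝒳 × 𝒴`, in curried form. -/
def IsJointPMF3 (Q : 𝒳 → 𝒳 → 𝒴 → ℝ) : Prop :=
  (∀ x x' y, 0 ≤ Q x x' y) ∧ ∑ x, ∑ x', ∑ y, Q x x' y = 1

/-- `𝒳`-marginal of a joint pmf. -/
def margX (Q : 𝒳 → 𝒴 → ℝ) : 𝒳 → ℝ := fun x => ∑ y, Q x y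

/-- `𝒴`-marginal of a joint pmf. -/
def margY (Q : 𝒳 → 𝒴 → ℝ) : 𝒴 → ℝ := fun y => ∑ x, Q x y

/-- Shannon entropy (natural logarithm, with the convention `0 log 0 = 0`,
which holds automatically since `Real.log 0 = 0`). -/
noncomputable def ent {α : Type*} [Fintype α] (p : α → ℝ) : ℝ :=
  -∑ a, p a * Real.log (p a)

/-- Mutual information `I_Q(X;Y)` of a joint pmf `Q` on `𝒳 × 𝒴`. -/
noncomputable def mutInf (Q : 𝒳 → 𝒴 → ℝ) : ℝ :=
  ∑ x, ∑ y, Q x y * Real.log (Q x y / (margX Q x * margY Q y))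

/-- Conditional entropy `H_Q(Y|X)` of a joint pmf `Q` on `𝒳 × 𝒴`. -/
noncomputable def condEntYX (Q : 𝒳 → 𝒴 → ℝ) : ℝ :=
  -∑ x, ∑ y, Q x y * Real.log (Q x y / margX Q x)

/-- Conditional entropy `H_Q(X|Y)` of a joint pmf `Q` on `𝒳 × 𝒴`. -/
noncomputable def condEntXY (Q : 𝒳 → 𝒴 → ℝ) : ℝ :=
  -∑ x, ∑ y, Q x y * Real.log (Q x y / margY Q y)

/-- The maximum-likelihood decoding metric `g_ML(Q) = ∑ Q(x,y) log W(y|x)`. -/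
noncomputable def gML (W : 𝒳 → 𝒴 → ℝ) (Q : 𝒳 → 𝒴 → ℝ) : ℝ :=
  ∑ x, ∑ y, Q x y * Real.log (W x y)

/-- The maximum mutual information decoding metric `g_MMI(Q) = I_Q(X;Y)`. -/
noncomputable def gMMI (Q : 𝒳 → 𝒴 → ℝ) : ℝ := mutInf Q

/-- The quantity `a_g(R, Q_Y)`: the maximum of `g(Q_{X̃Y})` over joint pmfs with
`𝒳`-marginal `Q_X`, `𝒴`-marginal `Q_Y` and `I_Q(X̃;Y) ≤ R`. -/
noncomputable def aFun (g : (𝒳 → 𝒴 → ℝ) → ℝ) (QX : 𝒳 → ℝ) (R : ℝ) (QY : 𝒴 → ℝ) : ℝ :=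
  sSup {v : ℝ | ∃ Q : 𝒳 → 𝒴 → ℝ, IsJointPMF Q ∧ margX Q = QX ∧ margY Q = QY ∧
    mutInf Q ≤ R ∧ v = g Q}

/-- Joint pmf on `𝒳 × 𝒳 × 𝒴` built from `Q_{XX'}` and a conditional pmf `Q_{Y|XX'}`. -/
def jointQ (QXX' : 𝒳 → 𝒳 → ℝ) (Qc : 𝒳 → 𝒳 → 𝒴 → ℝ) : 𝒳 → 𝒳 → 𝒴 → ℝ :=
  fun x x' y => QXX' x x' * Qc x x' y

/-- Marginal `Q_{XY}` of a joint pmf on `𝒳 × 𝒳 × 𝒴`. -/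
def margXY3 (Q : 𝒳 → 𝒳 → 𝒴 → ℝ) : 𝒳 → 𝒴 → ℝ := fun x y => ∑ x', Q x x' y

/-- Marginal `Q_{X'Y}` of a joint pmf on `𝒳 × 𝒳 × 𝒴`. -/
def margX'Y3 (Q : 𝒳 → 𝒳 → 𝒴 → ℝ) : 𝒳 → 𝒴 → ℝ := fun x' y => ∑ x, Q x x' y

/-- Marginal `Q_Y` of a joint pmf on `𝒳 × 𝒳 × 𝒴`. -/
def margY3 (Q : 𝒳 → 𝒳 → 𝒴 → ℝ) : 𝒴 → ℝ := fun y => ∑ x, ∑ x', Q x x' y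

/-- Conditional entropy `H_Q(Y|X,X')` of a joint pmf on `𝒳 × 𝒳 × 𝒴`. -/
noncomputable def condEntY3 (Q : 𝒳 → 𝒳 → 𝒴 → ℝ) : ℝ :=
  -∑ x, ∑ x', ∑ y, Q x x' y * Real.log (Q x x' y / ∑ y', Q x x' y')

/-- The objective `−E_Q[log W(Y|X)] − H_Q(Y|X,X')`. -/
noncomputable def obj (W : 𝒳 → 𝒴 → ℝ) (Q : 𝒳 → 𝒳 → 𝒴 → ℝ) : ℝ :=
  (-∑ x, ∑ x', ∑ y, Q x x' y * Real.log (W x y)) - condEntY3 Q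

/-- `Γ_g(Q_{XX'}, R)`: the infimum of `−E_Q[log W(Y|X)] − H_Q(Y|X,X')` over conditional
pmfs `Q_{Y|XX'}` satisfying `g(Q_{X'Y}) ≥ max (g(Q_{XY})) (a_g(R,Q_Y))`, as an
extended real, with `inf ∅ = +∞`. -/
noncomputable def Gamma (W : 𝒳 → 𝒴 → ℝ) (g : (𝒳 → 𝒴 → ℝ) → ℝ) (QX : 𝒳 → ℝ)
    (R : ℝ) (QXX' : 𝒳 → 𝒳 → ℝ) : EReal :=
  sInf {v : EReal | ∃ Qc : 𝒳 → 𝒳 → 𝒴 → ℝ, (∀ x x', IsPMF (Qc x x')) ∧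
    max (g (margXY3 (jointQ QXX' Qc))) (aFun g QX R (margY3 (jointQ QXX' Qc)))
      ≤ g (margX'Y3 (jointQ QXX' Qc)) ∧
    v = ((obj W (jointQ QXX' Qc) : ℝ) : EReal)}

/-- The single-letter TRC exponent `E_trc^g(R, Q_X)`. -/
noncomputable def Etrc (W : 𝒳 → 𝒴 → ℝ) (g : (𝒳 → 𝒴 → ℝ) → ℝ) (QX : 𝒳 → ℝ)
    (R : ℝ) : EReal :=
  sInf {v : EReal | ∃ QXX' : 𝒳 → 𝒳 → ℝ, IsJointPMF QXX' ∧ margX QXX' = QX ∧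
    margY QXX' = QX ∧ mutInf QXX' ≤ 2 * R ∧
    v = Gamma W g QX R QXX' + ((mutInf QXX' : ℝ) : EReal) - ((R : ℝ) : EReal)}

/-- The single-letter expurgated exponent `E_ex^g(R, Q_X)`. -/
noncomputable def Eex (W : 𝒳 → 𝒴 → ℝ) (g : (𝒳 → 𝒴 → ℝ) → ℝ) (QX : 𝒳 → ℝ)
    (R : ℝ) : EReal :=
  sInf {v : EReal | ∃ QXX' : 𝒳 → 𝒳 → ℝ, IsJointPMF QXX' ∧ margX QXX' = QX ∧
    margY QXX' = QX ∧ mutInf QXX' ≤ R ∧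
    v = Gamma W g QX R QXX' + ((mutInf QXX' : ℝ) : EReal) - ((R : ℝ) : EReal)}

/-- `Λ(Q_{XX'})`. -/
noncomputable def Lambda (W : 𝒳 → 𝒴 → ℝ) (QXX' : 𝒳 → 𝒳 → ℝ) : EReal :=
  ⨆ μ : {μ : ℝ // 0 ≤ μ}, ⨅ Qc : {Qc : 𝒳 → 𝒳 → 𝒴 → ℝ // ∀ x x', IsPMF (Qc x x')},
    ((obj W (jointQ QXX' Qc.1) + μ.1 * (mutInf (margXY3 (jointQ QXX' Qc.1)) -
      mutInf (margX'Y3 (jointQ QXX' Qc.1))) : ℝ) : EReal)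

/-- `Φ(Q_{XX'}, R)`. -/
noncomputable def Phi (W : 𝒳 → 𝒴 → ℝ) (QXX' : 𝒳 → 𝒳 → ℝ) (R : ℝ) : EReal :=
  ⨆ μ : {μ : ℝ // 0 ≤ μ}, ⨅ Qc : {Qc : 𝒳 → 𝒳 → 𝒴 → ℝ // ∀ x x', IsPMF (Qc x x')},
    ((obj W (jointQ QXX' Qc.1) + μ.1 * (R - mutInf (margX'Y3 (jointQ QXX' Qc.1))) : ℝ) : EReal)

/-- `Ψ(Q_{XX'})`. -/
noncomputable def Psi (W : 𝒳 → 𝒴 → ℝ) (QXX' : 𝒳 → 𝒳 → ℝ) : EReal :=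
  ⨆ s : {s : ℝ // 0 ≤ s},
    ((-∑ x, ∑ x', QXX' x x' * Real.log (∑ y, W x y ^ (1 - s.1) * W x' y ^ s.1) : ℝ) : EReal)

/-- `G(y, σ, τ, V)`. -/
noncomputable def Gfun (W : 𝒳 → 𝒴 → ℝ) (QX : 𝒳 → ℝ) (y : 𝒴) (σ τ : ℝ)
    (V : 𝒳 → ℝ) : ℝ :=
  (∑ x, W x y ^ (1 / σ) * QX x ^ (τ / σ) * V x ^ (-(τ / σ))) ^ σ

/-- `Θ(Q_{XX'}, R)`. -/
noncomputable def Theta (W : 𝒳 → 𝒴 → ℝ) (QX : 𝒳 → ℝ) (QXX' : 𝒳 → 𝒳 → ℝ)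
    (R : ℝ) : EReal :=
  ⨆ ρ : {ρ : ℝ // 0 ≤ ρ}, ⨅ σ : {σ : ℝ // 0 < σ}, ⨅ τ : {τ : ℝ // 0 ≤ τ},
    ⨅ V : {V : 𝒳 → ℝ // IsPosPMF V},
    ((ρ.1 * σ.1 * (R - ent QX) - ∑ x, ∑ x', QXX' x x' *
      Real.log (∑ y, W x y * W x' y ^ ρ.1 * Gfun W QX y σ.1 τ.1 V.1 ^ (-ρ.1)) : ℝ) : EReal)


lemma logsum_aux {ι : Type*} [Fintype ι] (p b : ι → ℝ) (hp : ∀ i, 0 ≤ p i) (hb : ∀ i, 0 ≤ b i)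
    (hpb : ∀ i, 0 < p i → 0 < b i) (hB : 0 < ∑ i, b i) :
    ∑ i, p i * (Real.log (b i) - Real.log (p i)) ≤
      (∑ i, p i) * (Real.log (∑ i, b i) - Real.log (∑ i, p i)) := by
  set B := ∑ i, b i with hBdef
  set P := ∑ i, p i with hPdef
  have key : ∀ i, p i * (Real.log (b i) - Real.log (p i)) ≤
      p i * (Real.log B - Real.log P) + (b i * (P / B) - p i) := by
    intro i
    have hP0 : 0 ≤ P := Finset.sum_nonneg fun i _ => hp i
    rcases (hp i).eq_or_lt with h | h
    · rw [← h]
      have : 0 ≤ b i * (P / B) := mul_nonneg (hb i) (div_nonneg hP0 hB.le)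
      simpa using this
    · have hbi := hpb i h
      have hP : 0 < P := lt_of_lt_of_le h (Finset.single_le_sum (f := p) (fun j _ => hp j) (Finset.mem_univ i))
      have h1 := Real.log_le_sub_one_of_pos (x := (b i * P) / (p i * B)) (by positivity)
      rw [Real.log_div (by positivity) (by positivity), Real.log_mul (by positivity) (by positivity),
        Real.log_mul (by positivity) (by positivity)] at h1
      have h2 := mul_le_mul_of_nonneg_left h1 h.le
      have h3 : p i * (b i * P / (p i * B) - 1) = b i * (P / B) - p i := by field_simp
      rw [h3] at h2
      nlinarith
  calc _ ≤ ∑ i, (p i * (Real.log B - Real.log P) + (b i * (P / B) - p i)) :=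
        Finset.sum_le_sum fun i _ => key i
    _ = P * (Real.log B - Real.log P) + (B * (P / B) - P) := by
        rw [Finset.sum_add_distrib, Finset.sum_sub_distrib, ← Finset.sum_mul, ← Finset.sum_mul]
    _ = _ := by
        have : B * (P / B) = P := by field_simp
        rw [this]; ring

/-- The inner sum of `Gfun` is positive. -/
lemma Bpos {𝒳 𝒴 : Type*} [Fintype 𝒳] [Fintype 𝒴]
    (W : 𝒳 → 𝒴 → ℝ) (hW : IsChannel W) (QX : 𝒳 → ℝ) (hQX : IsPMF QX)
    (σ τ : ℝ) (V : 𝒳 → ℝ) (hV : IsPosPMF V) (y : 𝒴) :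
    0 < ∑ x, W x y ^ (1 / σ) * QX x ^ (τ / σ) * V x ^ (-(τ / σ)) := by
  have : ∃ x, 0 < QX x := by
    by_contra! h
    have : ∑ x, QX x ≤ 0 := Finset.sum_nonpos fun x _ => h x
    linarith [hQX.2]
  obtain ⟨x, hx⟩ := this
  refine Finset.sum_pos' (fun x _ => ?_) ⟨x, Finset.mem_univ x, ?_⟩
  · have := (hW x).1 y
    have := hV.1 x
    have := hQX.1 x
    positivity
  · have := (hW x).1 y
    have := hV.1 x
    positivity

lemma gML_bound {𝒳 𝒴 : Type*} [Fintype 𝒳] [Fintype 𝒴]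
    (W : 𝒳 → 𝒴 → ℝ) (hW : IsChannel W) (QX : 𝒳 → ℝ) (hQX : IsPMF QX) (R : ℝ)
    (σ τ : ℝ) (hσ : 0 < σ) (hτ : 0 ≤ τ) (V : 𝒳 → ℝ) (hV : IsPosPMF V)
    (Q : 𝒳 → 𝒴 → ℝ) (hQ : IsJointPMF Q) (hX : margX Q = QX) (hI : mutInf Q ≤ R) :
    gML W Q ≤ σ * (R - ent QX) + ∑ y, margY Q y * Real.log (Gfun W QX y σ τ V) := by
  have hQX0 : ∀ x y, 0 < Q x y → 0 < QX x := by
    intro x y h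
    rw [← hX]
    exact lt_of_lt_of_le h (Finset.single_le_sum (f := Q x) (fun j _ => hQ.1 x j) (Finset.mem_univ y))
  have hQY0 : ∀ x y, 0 < Q x y → 0 < margY Q y := by
    intro x y h
    exact lt_of_lt_of_le h (Finset.single_le_sum (f := fun x => Q x y) (fun j _ => hQ.1 j y)
      (Finset.mem_univ x))
  have hD := logsum_aux QX V hQX.1 (fun i => (hV.1 i).le) (fun i _ => hV.1 i) (by rw [hV.2]; norm_num)
  rw [hV.2, hQX.2] at hD
  simp only [sub_self, mul_zero] at hD
  set b : 𝒴 → 𝒳 → ℝ := fun y x => W x y ^ (1 / σ) * QX x ^ (τ / σ) * V x ^ (-(τ / σ)) with hb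
  have hb0 : ∀ y x, 0 ≤ b y x := by
    intro y x
    have := (hW x).1 y
    have := hV.1 x
    have := hQX.1 x
    simp only [hb]
    positivity
  have hbpos : ∀ y x, 0 < Q x y → 0 < b y x := by
    intro y x h
    have := (hW x).1 y
    have := hV.1 x
    have := hQX0 x y h
    simp only [hb]
    positivity
  have hJ : ∀ y, _ := fun y => logsum_aux (fun x => Q x y) (b y) (fun x => hQ.1 x y) (hb0 y)
    (hbpos y) (Bpos W hW QX hQX σ τ V hV y)
  have hJ' := Finset.sum_le_sum fun y (_ : y ∈ Finset.univ) => hJ y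
  have hlogG : ∀ y, Real.log (Gfun W QX y σ τ V) = σ * Real.log (∑ x, b y x) := by
    intro y
    exact Real.log_rpow (Bpos W hW QX hQX σ τ V hV y) σ
  have hterm : ∀ y x, σ * (Q x y * (Real.log (b y x) - Real.log (Q x y)))
      = Q x y * Real.log (W x y) + τ * (Q x y * (Real.log (QX x) - Real.log (V x)))
        - σ * (Q x y * Real.log (Q x y / (margX Q x * margY Q y)))
        - σ * (Q x y * Real.log (QX x)) - σ * (Q x y * Real.log (margY Q y)) := by
    intro y x
    rcases (hQ.1 x y).eq_or_lt with h | h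
    · rw [← h]; simp
    · have h1 := (hW x).1 y
      have h2 := hV.1 x
      have h3 := hQX0 x y h
      have h4 := hQY0 x y h
      rw [hX, Real.log_div h.ne' (by positivity), Real.log_mul h3.ne' h4.ne']
      simp only [hb]
      rw [Real.log_mul (by positivity) (by positivity), Real.log_mul (by positivity) (by positivity),
        Real.log_rpow h1, Real.log_rpow h2, Real.log_rpow h3]
      field_simp
      ring
  have hsum : σ * (∑ y, ∑ x, Q x y * (Real.log (b y x) - Real.log (Q x y)))
      = gML W Q + τ * (∑ x, QX x * (Real.log (QX x) - Real.log (V x)))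
        - σ * mutInf Q + σ * ent QX - σ * ∑ y, margY Q y * Real.log (margY Q y) := by
    have e1 : ∀ f : 𝒳 → ℝ, ∑ y, ∑ x, Q x y * f x = ∑ x, QX x * f x := by
      intro f
      rw [Finset.sum_comm]
      refine Finset.sum_congr rfl fun x _ => ?_
      rw [← Finset.sum_mul, ← hX]; rfl
    have e2 : ∑ y, ∑ x, Q x y * Real.log (margY Q y) = ∑ y, margY Q y * Real.log (margY Q y) := by
      refine Finset.sum_congr rfl fun x _ => ?_
      rw [← Finset.sum_mul]; rfl
    simp only [Finset.mul_sum, hterm]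
    simp only [Finset.sum_sub_distrib, Finset.sum_add_distrib, ← Finset.mul_sum]
    rw [e1 fun x => Real.log (QX x), e1 fun x => (Real.log (QX x) - Real.log (V x)), e2]
    unfold gML mutInf ent
    rw [Finset.sum_comm (f := fun y x => Q x y * Real.log (W x y)),
      Finset.sum_comm (f := fun y x => Q x y * Real.log (Q x y / (margX Q x * margY Q y)))]
    ring
  have hD' : 0 ≤ ∑ x, QX x * (Real.log (QX x) - Real.log (V x)) := by
    have : ∑ x, QX x * (Real.log (QX x) - Real.log (V x))
      = - ∑ x, QX x * (Real.log (V x) - Real.log (QX x)) := by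
      rw [← Finset.sum_neg_distrib]
      exact Finset.sum_congr rfl fun x _ => by ring
    rw [this]; linarith
  have hr : σ * ∑ y, (∑ x, Q x y) * (Real.log (∑ x, b y x) - Real.log (∑ x, Q x y))
      = ∑ y, margY Q y * Real.log (Gfun W QX y σ τ V)
        - σ * ∑ y, margY Q y * Real.log (margY Q y) := by
    rw [Finset.mul_sum, Finset.mul_sum, ← Finset.sum_sub_distrib]
    refine Finset.sum_congr rfl fun y _ => ?_
    rw [hlogG]
    unfold margY
    ring
  have h1 := mul_le_mul_of_nonneg_left hJ' hσ.le
  rw [hsum, hr] at h1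
  have h2 := mul_nonneg hτ hD'
  have h3 := mul_le_mul_of_nonneg_left hI hσ.le
  linarith

lemma aFun_bound {𝒳 𝒴 : Type*} [Fintype 𝒳] [Fintype 𝒴]
    (W : 𝒳 → 𝒴 → ℝ) (hW : IsChannel W) (QX : 𝒳 → ℝ) (hQX : IsPMF QX) (R : ℝ) (hR : 0 ≤ R)
    (σ τ : ℝ) (hσ : 0 < σ) (hτ : 0 ≤ τ) (V : 𝒳 → ℝ) (hV : IsPosPMF V)
    (QY : 𝒴 → ℝ) (hQY : IsPMF QY) :
    aFun (gML W) QX R QY ≤ σ * (R - ent QX) + ∑ y, QY y * Real.log (Gfun W QX y σ τ V) := by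
  unfold aFun
  apply csSup_le
  · have mX : margX (fun x y => QX x * QY y) = QX := by
      funext x; simp [margX, ← Finset.mul_sum, hQY.2]
    have mY : margY (fun x y => QX x * QY y) = QY := by
      funext x; simp [margY, ← Finset.sum_mul, hQX.2]
    refine ⟨_, fun x y => QX x * QY y, ⟨fun x y => mul_nonneg (hQX.1 x) (hQY.1 y), ?_⟩, mX, mY, ?_, rfl⟩
    · simp [← Finset.mul_sum, hQX.2, hQY.2]
    · unfold mutInf
      rw [mX, mY]
      refine le_trans (le_of_eq ?_) hR
      refine Finset.sum_eq_zero fun x _ => Finset.sum_eq_zero fun y _ => ?_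
      rcases eq_or_ne (QX x * QY y) 0 with h | h
      · simp [h]
      · simp only [div_self h, Real.log_one, mul_zero]
  · rintro v ⟨Q, hQ, hX, hY, hI, rfl⟩
    rw [← hY]
    exact gML_bound W hW QX hQX R σ τ hσ hτ V hV Q hQ hX hI

/-- **Appendix A, concluding chain:** `Ξ(Q_{XX'},R) ≤ Θ(Q_{XX'},R)`. -/
theorem Xi_le_Theta {𝒳 𝒴 : Type*} [Fintype 𝒳] [Fintype 𝒴]
    [Nonempty 𝒳] [Nonempty 𝒴]
    (W : 𝒳 → 𝒴 → ℝ) (hW : IsChannel W)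
    (QX : 𝒳 → ℝ) (hQX : IsPMF QX) (R : ℝ) (hR : 0 ≤ R)
    (QXX' : 𝒳 → 𝒳 → ℝ) (hQ : IsJointPMF QXX') :
    (⨆ ρ : {ρ : ℝ // 0 ≤ ρ},
        ⨅ Qc : {Qc : 𝒳 → 𝒳 → 𝒴 → ℝ // ∀ x x', IsPMF (Qc x x')},
          ((obj W (jointQ QXX' Qc.1)
            + ρ.1 * (aFun (gML W) QX R (margY3 (jointQ QXX' Qc.1))
              - gML W (margX'Y3 (jointQ QXX' Qc.1))) : ℝ) : EReal))
      ≤ Theta W QX QXX' R := by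
  unfold Theta
  refine iSup_mono fun ρ => ?_
  refine le_iInf fun σ => le_iInf fun τ => le_iInf fun V => ?_
  obtain ⟨ρ, hρ⟩ := ρ
  obtain ⟨σ, hσ⟩ := σ
  obtain ⟨τ, hτ⟩ := τ
  obtain ⟨V, hV⟩ := V
  have hG : ∀ y, 0 < Gfun W QX y σ τ V := fun y =>
    Real.rpow_pos_of_pos (Bpos W hW QX hQX σ τ V hV y) σ
  set w : 𝒳 → 𝒳 → 𝒴 → ℝ := fun x x' y => W x y * W x' y ^ ρ * Gfun W QX y σ τ V ^ (-ρ) with hw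
  have hwpos : ∀ x x' y, 0 < w x x' y := by
    intro x x' y
    have := (hW x).1 y
    have := (hW x').1 y
    have := hG y
    simp only [hw]
    positivity
  set Z : 𝒳 → 𝒳 → ℝ := fun x x' => ∑ y, w x x' y with hZ
  have hZpos : ∀ x x', 0 < Z x x' := fun x x' =>
    Finset.sum_pos (fun y _ => hwpos x x' y) Finset.univ_nonempty
  have hQc : ∀ x x', IsPMF (fun y => w x x' y / Z x x') := by
    intro x x'
    refine ⟨fun y => (div_pos (hwpos x x' y) (hZpos x x')).le, ?_⟩
    rw [← Finset.sum_div]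
    exact div_self (hZpos x x').ne'
  refine iInf_le_of_le ⟨fun x x' y => w x x' y / Z x x', hQc⟩ ?_
  rw [EReal.coe_le_coe_iff]
  simp only
  set J := jointQ QXX' (fun x x' y => w x x' y / Z x x') with hJ
  have hJy : ∀ x x', ∑ y, J x x' y = QXX' x x' := by
    intro x x'
    simp only [hJ, jointQ]
    rw [← Finset.mul_sum, (hQc x x').2, mul_one]
  have hJ0 : ∀ x x' y, 0 ≤ J x x' y := fun x x' y => mul_nonneg (hQ.1 x x') ((hQc x x').1 y)
  have hYswap : ∀ f : 𝒴 → ℝ, ∑ x, ∑ x', ∑ y, J x x' y * f y = ∑ y, margY3 J y * f y := by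
    intro f
    simp only [margY3, Finset.sum_mul]
    rw [Finset.sum_comm]
    conv_lhs => enter [2, x']; rw [Finset.sum_comm]
    rw [Finset.sum_comm]
    exact Finset.sum_congr rfl fun y _ => Finset.sum_comm
  have hmY : IsPMF (margY3 J) := by
    refine ⟨fun y => Finset.sum_nonneg fun x _ => Finset.sum_nonneg fun x' _ => hJ0 x x' y, ?_⟩
    have := hYswap fun _ => 1
    simp only [mul_one] at this
    rw [← this]
    simp only [hJy, hQ.2]
  have ha := aFun_bound W hW QX hQX R hR σ τ hσ hτ V hV _ hmY
  have hterm : ∀ x x' y, J x x' y * Real.log (J x x' y / ∑ y', J x x' y')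
      = J x x' y * Real.log (W x y) + ρ * (J x x' y * Real.log (W x' y))
        - ρ * (J x x' y * Real.log (Gfun W QX y σ τ V)) - J x x' y * Real.log (Z x x') := by
    intro x x' y
    rw [hJy]
    rcases eq_or_ne (QXX' x x') 0 with h | h
    · have : J x x' y = 0 := by simp [hJ, jointQ, h]
      simp [this]
    · have e : J x x' y / QXX' x x' = w x x' y / Z x x' := by
        simp only [hJ, jointQ]; field_simp
      have h1 := (hW x).1 y
      have h2 := (hW x').1 y
      have h3 := hG y
      rw [e, Real.log_div (hwpos x x' y).ne' (hZpos x x').ne']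
      simp only [hw]
      rw [Real.log_mul (by positivity) (by positivity), Real.log_mul (by positivity) (by positivity),
        Real.log_rpow h2, Real.log_rpow h3]
      ring
  have hg : gML W (margX'Y3 J) = ∑ x, ∑ x', ∑ y, J x x' y * Real.log (W x' y) := by
    simp only [gML, margX'Y3, Finset.sum_mul]
    rw [Finset.sum_comm (s := (Finset.univ : Finset 𝒳)) (t := (Finset.univ : Finset 𝒳))]
    exact Finset.sum_congr rfl fun x' _ => Finset.sum_comm
  have hobj : obj W J = ρ * gML W (margX'Y3 J)
      - ρ * ∑ y, margY3 J y * Real.log (Gfun W QX y σ τ V)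
      - ∑ x, ∑ x', QXX' x x' * Real.log (Z x x') := by
    unfold obj condEntY3
    simp only [hterm]
    simp only [Finset.sum_sub_distrib, Finset.sum_add_distrib, ← Finset.mul_sum]
    rw [hYswap, hg]
    simp only [← Finset.sum_mul, hJy]
    ring
  have h1 := mul_le_mul_of_nonneg_left ha hρ
  rw [hobj]
  linarith

end EE
end

section
/- (Appendix C, inner maximization, eqs. (C.27)–(C.37)) Let B be a nonempty finite set, let w be a strictly positive pmf on B, and let p ∈ (0,1). Then the maximum over pmfs v on B of ∑_{y} ( v(y)/w(y) )^{p} equals ( ∑_{y} w(y)^{p/(p−1)} )^{1−p}, and it is attained at v(y) = w(y)^{p/(p−1)} / ∑_{y'} w(y')^{p/(p−1)}. -/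
open Real BigOperators Filter

namespace EE

variable {𝒳 𝒴 : Type*} [Fintype 𝒳] [Fintype 𝒴]

/-- **Appendix C, inner maximization (eqs. (C.27)–(C.37)):** for `p ∈ (0,1)`, the maximum
over pmfs `v` of `∑_y (v(y)/w(y))^p` is `(∑_y w(y)^{p/(p−1)})^{1−p}`, attained at
`v(y) = w(y)^{p/(p−1)} / ∑_{y'} w(y')^{p/(p−1)}`. -/
theorem inner_maximization {B : Type*} [Fintype B] [Nonempty B]
    (w : B → ℝ) (hw : IsPosPMF w) (p : ℝ) (hp0 : 0 < p) (hp1 : p < 1) :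
    IsGreatest {u : ℝ | ∃ q : B → ℝ, IsPMF q ∧ u = ∑ y, (q y / w y) ^ p}
      ((∑ y, w y ^ (p / (p - 1))) ^ (1 - p)) ∧
    IsPMF (fun y => w y ^ (p / (p - 1)) / ∑ y', w y' ^ (p / (p - 1))) ∧
    ∑ y, ((w y ^ (p / (p - 1)) / ∑ y', w y' ^ (p / (p - 1))) / w y) ^ p
      = (∑ y, w y ^ (p / (p - 1))) ^ (1 - p) := by
  obtain ⟨hwp, -⟩ := hw
  have hp1' : p - 1 ≠ 0 := by linarith
  have hp1'' : 1 - p ≠ 0 := by linarith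
  set S : ℝ := ∑ y, w y ^ (p / (p - 1)) with hS
  have hSpos : 0 < S :=
    Finset.sum_pos (fun y _ => rpow_pos_of_pos (hwp y) _) Finset.univ_nonempty
  have hpmf : IsPMF (fun y => w y ^ (p / (p - 1)) / S) := by
    refine ⟨fun y => div_nonneg (rpow_pos_of_pos (hwp y) _).le hSpos.le, ?_⟩
    rw [← Finset.sum_div, ← hS, div_self hSpos.ne']
  have hval : ∑ y, ((w y ^ (p / (p - 1)) / S) / w y) ^ p = S ^ (1 - p) := by
    have h1 : ∀ y, ((w y ^ (p / (p - 1)) / S) / w y) ^ p = w y ^ (p / (p - 1)) / S ^ p := by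
      intro y
      have h2 : (w y ^ (p / (p - 1)) / S) / w y = w y ^ (p / (p - 1) - 1) / S := by
        rw [rpow_sub (hwp y), rpow_one, div_right_comm]
      rw [h2, div_rpow (rpow_pos_of_pos (hwp y) _).le hSpos.le, ← rpow_mul (hwp y).le]
      congr 2
      field_simp
      ring
    simp_rw [h1]
    rw [← Finset.sum_div, ← hS, rpow_sub hSpos, rpow_one]
  refine ⟨⟨⟨_, hpmf, hval.symm⟩, ?_⟩, hpmf, hval⟩
  rintro u ⟨q, ⟨hq0, hq1⟩, rfl⟩
  have hc : (1 / p).HolderConjugate (1 / (1 - p)) := by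
    rw [holderConjugate_iff]
    refine ⟨by rw [lt_div_iff₀ hp0]; linarith, ?_⟩
    simp
  have H := inner_le_Lp_mul_Lq_of_nonneg Finset.univ (f := fun y => q y ^ p)
    (g := fun y => w y ^ (-p)) hc (fun y _ => rpow_nonneg (hq0 y) _)
    (fun y _ => rpow_nonneg (hwp y).le _)
  have e1 : ∀ y, (q y ^ p) ^ (1 / p) = q y := fun y => by
    rw [← rpow_mul (hq0 y), mul_one_div_cancel hp0.ne', rpow_one]
  have e2 : ∀ y, (w y ^ (-p)) ^ (1 / (1 - p)) = w y ^ (p / (p - 1)) := fun y => by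
    rw [← rpow_mul (hwp y).le]
    congr 1
    rw [← neg_sub 1 p, div_neg]
    ring
  have e3 : ∀ y, (q y / w y) ^ p = q y ^ p * w y ^ (-p) := fun y => by
    rw [div_rpow (hq0 y) (hwp y).le, rpow_neg (hwp y).le, div_eq_mul_inv]
  simp only [e1, e2, hq1, one_rpow, one_mul, one_div_one_div] at H
  simp_rw [e3]
  exact H

end EE
end

section
/- (Appendix C, eq. (C.10)) Let W be a channel from 𝒳 to 𝒴 and let Q_{XX'} be a pmf on 𝒳 × 𝒳. Then Λ(Q_{XX'}) ≥ sup_{μ ≥ 0} sup over strictly positive conditional pmfs V(·|x) on 𝒴 inf over strictly positive conditional pmfs V'(·|x') on 𝒴 of { −∑_{x,x'} Q_{XX'}(x,x') log [ ∑_y W(y|x) V'(y|x')^{μ} V(y|x)^{−μ} ] }. -/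
open Real BigOperators Filter

namespace EE

variable {𝒳 𝒴 : Type*} [Fintype 𝒳] [Fintype 𝒴]

lemma aux_term {q t v : ℝ} (hq : 0 ≤ q) (ht : q ≤ t) (hv : 0 < v) :
    q - t * v ≤ q * Real.log (q / t) - q * Real.log v := by
  rcases hq.eq_or_lt with h | h
  · subst h
    have : 0 ≤ t * v := mul_nonneg ht hv.le
    simp; linarith
  · have ht' : 0 < t := lt_of_lt_of_le h ht
    have h1 := Real.log_le_sub_one_of_pos (show 0 < t * v / q by positivity)
    rw [Real.log_div (by positivity) (by positivity), Real.log_mul ht'.ne' hv.ne'] at h1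
    rw [Real.log_div h.ne' ht'.ne']
    have h2 := mul_le_mul_of_nonneg_left h1 hq
    have h3 : q * (t * v / q - 1) = t * v - q := by field_simp
    rw [h3] at h2
    linarith

lemma gibbs {α : Type*} [Fintype α] (q a : α → ℝ) (hq : IsPMF q) (ha : ∀ y, 0 < a y) :
    -Real.log (∑ y, a y) ≤ ∑ y, (q y * Real.log (q y) - q y * Real.log (a y)) := by
  have hne : Nonempty α := by
    by_contra h
    rw [not_nonempty_iff] at h
    have := hq.2
    simp at this
  have hS : 0 < ∑ y, a y := Finset.sum_pos (fun y _ => ha y) Finset.univ_nonempty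
  have h1 : ∀ y, q y - a y / (∑ y, a y) - q y * Real.log (∑ y, a y) ≤
      q y * Real.log (q y) - q y * Real.log (a y) := by
    intro y
    have hq1 : q y ≤ 1 := by
      rw [← hq.2]
      exact Finset.single_le_sum (fun i _ => hq.1 i) (Finset.mem_univ y)
    have := aux_term (hq.1 y) hq1 (div_pos (ha y) hS)
    rw [Real.log_div (ha y).ne' hS.ne', div_one, one_mul] at this
    linarith
  have h2 := Finset.sum_le_sum (fun y (_ : y ∈ Finset.univ) => h1 y)
  rw [Finset.sum_sub_distrib, Finset.sum_sub_distrib, ← Finset.sum_div, ← Finset.sum_mul,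
    hq.2, div_self hS.ne'] at h2
  linarith

lemma le_margX (A : 𝒳 → 𝒴 → ℝ) (hA : ∀ x y, 0 ≤ A x y) (x : 𝒳) (y : 𝒴) :
    A x y ≤ margX A x :=
  Finset.single_le_sum (fun i _ => hA x i) (Finset.mem_univ y)

lemma le_margY (A : 𝒳 → 𝒴 → ℝ) (hA : ∀ x y, 0 ≤ A x y) (x : 𝒳) (y : 𝒴) :
    A x y ≤ margY A y :=
  Finset.single_le_sum (f := fun x => A x y) (fun i _ => hA i y) (Finset.mem_univ x)

lemma mutInf_eq (A : 𝒳 → 𝒴 → ℝ) (hA : ∀ x y, 0 ≤ A x y) :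
    mutInf A = ent (margY A) - condEntYX A := by
  have h1 : ∀ x y, A x y * Real.log (A x y / (margX A x * margY A y)) =
      A x y * Real.log (A x y / margX A x) - A x y * Real.log (margY A y) := by
    intro x y
    rcases (hA x y).eq_or_lt with h | h
    · simp [← h]
    · have hx := lt_of_lt_of_le h (le_margX A hA x y)
      have hy := lt_of_lt_of_le h (le_margY A hA x y)
      rw [Real.log_div h.ne' (by positivity), Real.log_div h.ne' hx.ne',
        Real.log_mul hx.ne' hy.ne']
      ring
  have h2 : ∑ x, ∑ y, A x y * Real.log (margY A y) =
      ∑ y, margY A y * Real.log (margY A y) := by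
    rw [Finset.sum_comm]
    refine Finset.sum_congr rfl fun y _ => ?_
    rw [← Finset.sum_mul]
    rfl
  unfold mutInf ent condEntYX
  simp only [h1, Finset.sum_sub_distrib]
  rw [h2]
  ring

lemma condEnt_le (A : 𝒳 → 𝒴 → ℝ) (hA : ∀ x y, 0 ≤ A x y) (V : 𝒳 → 𝒴 → ℝ)
    (hV : ∀ x, IsPosPMF (V x)) :
    ∑ x, ∑ y, A x y * Real.log (V x y) ≤ -condEntYX A := by
  unfold condEntYX
  rw [neg_neg]
  refine Finset.sum_le_sum fun x _ => ?_
  have h := Finset.sum_le_sum (fun y (_ : y ∈ Finset.univ) =>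
    aux_term (hA x y) (le_margX A hA x y) ((hV x).1 y))
  rw [Finset.sum_sub_distrib, Finset.sum_sub_distrib, ← Finset.mul_sum, (hV x).2] at h
  have : ∑ y, A x y = margX A x := rfl
  linarith

lemma exists_V' [Nonempty 𝒴] (B : 𝒳 → 𝒴 → ℝ) (hB : IsJointPMF B) (δ : ℝ) (hδ : 0 < δ) :
    ∃ V' : 𝒳 → 𝒴 → ℝ, (∀ x, IsPosPMF (V' x)) ∧
      -condEntYX B - δ ≤ ∑ x, ∑ y, B x y * Real.log (V' x y) := by
  have hε0 : 0 < Real.exp (-δ) := Real.exp_pos _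
  have hε1 : Real.exp (-δ) < 1 := by rw [Real.exp_lt_one_iff]; linarith
  have hc : (0 : ℝ) < Fintype.card 𝒴 := by exact_mod_cast Fintype.card_pos
  set e := Real.exp (-δ) with he
  have hm0 : ∀ x, 0 ≤ margX B x := fun x => Finset.sum_nonneg fun y _ => hB.1 x y
  refine ⟨fun x y => if margX B x = 0 then 1 / (Fintype.card 𝒴 : ℝ) else
    e * (B x y / margX B x) + (1 - e) / (Fintype.card 𝒴 : ℝ), fun x => ⟨fun y => ?_, ?_⟩, ?_⟩
  · dsimp only
    split_ifs with h
    · positivity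
    · have h1 : 0 ≤ e * (B x y / margX B x) :=
        mul_nonneg hε0.le (div_nonneg (hB.1 x y) (hm0 x))
      have h2 : 0 < (1 - e) / (Fintype.card 𝒴 : ℝ) := div_pos (by linarith) hc
      linarith
  · by_cases h : margX B x = 0
    · simp [h]
    · simp only [h, if_false]
      rw [Finset.sum_add_distrib, ← Finset.mul_sum, ← Finset.sum_div]
      have : ∑ y, B x y = margX B x := rfl
      rw [this, div_self h]
      simp
      field_simp
      ring
  · have hs : -condEntYX B - δ =
        ∑ x, ∑ y, (B x y * Real.log (B x y / margX B x) - B x y * δ) := by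
      simp only [Finset.sum_sub_distrib, ← Finset.sum_mul]
      rw [hB.2]
      unfold condEntYX
      ring
    rw [hs]
    refine Finset.sum_le_sum fun x _ => Finset.sum_le_sum fun y _ => ?_
    rcases (hB.1 x y).eq_or_lt with h | h
    · simp [← h]
    · have hx := lt_of_lt_of_le h (le_margX B hB.1 x y)
      dsimp only
      rw [← mul_sub, if_neg hx.ne']
      refine mul_le_mul_of_nonneg_left ?_ h.le
      have h3 : Real.log (B x y / margX B x) - δ = Real.log (e * (B x y / margX B x)) := by
        rw [Real.log_mul hε0.ne' (div_pos h hx).ne', he, Real.log_exp]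
        ring
      rw [h3]
      refine Real.log_le_log (mul_pos hε0 (div_pos h hx)) ?_
      have h2 : 0 < (1 - e) / (Fintype.card 𝒴 : ℝ) := div_pos (by linarith) hc
      linarith

lemma key (W : 𝒳 → 𝒴 → ℝ) (hW : IsChannel W)
    (QXX' : 𝒳 → 𝒳 → ℝ) (hQ : IsJointPMF QXX') (Qc : 𝒳 → 𝒳 → 𝒴 → ℝ)
    (hQc : ∀ x x', IsPMF (Qc x x')) (μ : ℝ) (V V' : 𝒳 → 𝒴 → ℝ)
    (hV : ∀ x, IsPosPMF (V x)) (hV' : ∀ x, IsPosPMF (V' x)) :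
    -∑ x, ∑ x', QXX' x x' * Real.log (∑ y, W x y * V' x' y ^ μ * V x y ^ (-μ)) ≤
      obj W (jointQ QXX' Qc) +
        μ * (∑ x, ∑ y, margXY3 (jointQ QXX' Qc) x y * Real.log (V x y)
          - ∑ x', ∑ y, margX'Y3 (jointQ QXX' Qc) x' y * Real.log (V' x' y)) := by
  have hA : ∑ x, ∑ y, margXY3 (jointQ QXX' Qc) x y * Real.log (V x y) =
      ∑ x, ∑ x', ∑ y, QXX' x x' * Qc x x' y * Real.log (V x y) := by
    refine Finset.sum_congr rfl fun x _ => ?_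
    rw [Finset.sum_comm]
    refine Finset.sum_congr rfl fun y _ => ?_
    rw [← Finset.sum_mul]
    rfl
  have hB : ∑ x', ∑ y, margX'Y3 (jointQ QXX' Qc) x' y * Real.log (V' x' y) =
      ∑ x, ∑ x', ∑ y, QXX' x x' * Qc x x' y * Real.log (V' x' y) := by
    rw [Finset.sum_comm (s := (Finset.univ : Finset 𝒳)) (t := (Finset.univ : Finset 𝒳))]
    refine Finset.sum_congr rfl fun x' _ => ?_
    rw [Finset.sum_comm]
    refine Finset.sum_congr rfl fun y _ => ?_
    rw [← Finset.sum_mul]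
    rfl
  rw [hA, hB]
  unfold obj condEntY3 jointQ
  rw [sub_neg_eq_add]
  simp only [← Finset.sum_neg_distrib, ← Finset.sum_add_distrib, ← Finset.sum_sub_distrib,
    Finset.mul_sum]
  refine Finset.sum_le_sum fun x _ => Finset.sum_le_sum fun x' _ => ?_
  rw [← Finset.mul_sum, (hQc x x').2, mul_one]
  rcases (hQ.1 x x').eq_or_lt with h | h
  · simp [← h]
  have hg := gibbs (Qc x x') (fun y => W x y * V' x' y ^ μ * V x y ^ (-μ)) (hQc x x')
    (fun y => mul_pos (mul_pos ((hW x).1 y) (Real.rpow_pos_of_pos ((hV' x').1 y) _))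
      (Real.rpow_pos_of_pos ((hV x).1 y) _))
  have := mul_le_mul_of_nonneg_left hg h.le
  rw [Finset.mul_sum] at this
  rw [← mul_neg]
  refine this.trans (le_of_eq ?_)
  refine Finset.sum_congr rfl fun y _ => ?_
  have h1 := (hW x).1 y
  have h2 := (hV x).1 y
  have h3 := (hV' x').1 y
  rw [mul_div_cancel_left₀ _ h.ne', Real.log_mul (by positivity) (by positivity),
    Real.log_mul (by positivity) (by positivity), Real.log_rpow h2, Real.log_rpow h3]
  ring

/-- **Appendix C, eq. (C.10):** a sup-inf lower bound on `Λ(Q_{XX'})`. -/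
theorem Lambda_lower_bound {𝒳 𝒴 : Type*} [Fintype 𝒳] [Fintype 𝒴]
    [Nonempty 𝒳] [Nonempty 𝒴]
    (W : 𝒳 → 𝒴 → ℝ) (hW : IsChannel W)
    (QXX' : 𝒳 → 𝒳 → ℝ) (hQ : IsJointPMF QXX') :
    Lambda W QXX' ≥
      ⨆ μ : {μ : ℝ // 0 ≤ μ}, ⨆ V : {V : 𝒳 → 𝒴 → ℝ // ∀ x, IsPosPMF (V x)},
        ⨅ V' : {V' : 𝒳 → 𝒴 → ℝ // ∀ x', IsPosPMF (V' x')},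
          ((-∑ x, ∑ x', QXX' x x' *
            Real.log (∑ y, W x y * V'.1 x' y ^ μ.1 * V.1 x y ^ (-μ.1)) : ℝ) : EReal) := by
  refine iSup_mono fun μ => iSup_le fun V => le_iInf fun Qc => ?_
  obtain ⟨μ, hμ⟩ := μ
  obtain ⟨V, hV⟩ := V
  obtain ⟨Qc, hQc⟩ := Qc
  dsimp only
  have hJ : ∀ x x' y, 0 ≤ jointQ QXX' Qc x x' y :=
    fun x x' y => mul_nonneg (hQ.1 x x') ((hQc x x').1 y)
  have hA0 : ∀ x y, 0 ≤ margXY3 (jointQ QXX' Qc) x y :=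
    fun x y => Finset.sum_nonneg fun x' _ => hJ x x' y
  have hB0 : ∀ x y, 0 ≤ margX'Y3 (jointQ QXX' Qc) x y :=
    fun x' y => Finset.sum_nonneg fun x _ => hJ x x' y
  have hB : IsJointPMF (margX'Y3 (jointQ QXX' Qc)) := by
    refine ⟨hB0, ?_⟩
    rw [← hQ.2, Finset.sum_comm (f := fun x y => QXX' x y)]
    refine Finset.sum_congr rfl fun x' _ => ?_
    unfold margX'Y3 jointQ
    rw [Finset.sum_comm]
    refine Finset.sum_congr rfl fun x _ => ?_
    rw [← Finset.mul_sum, (hQc x x').2, mul_one]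
  have hYY : margY (margXY3 (jointQ QXX' Qc)) = margY (margX'Y3 (jointQ QXX' Qc)) := by
    funext y
    unfold margY margXY3 margX'Y3
    exact Finset.sum_comm
  have h1 := mutInf_eq _ hA0
  have h2 := mutInf_eq _ hB0
  have h3 := condEnt_le _ hA0 V hV
  rw [hYY] at h1
  refine le_of_forall_gt_imp_ge_of_dense fun r hr => ?_
  induction r with
  | bot => exact absurd hr not_lt_bot
  | top => exact le_top
  | coe r =>
    rw [EReal.coe_lt_coe_iff] at hr
    set s := obj W (jointQ QXX' Qc) + μ * (mutInf (margXY3 (jointQ QXX' Qc)) -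
      mutInf (margX'Y3 (jointQ QXX' Qc))) with hs
    have hδ : 0 < (r - s) / (μ + 1) := div_pos (by linarith) (by linarith)
    obtain ⟨V', hV', h4⟩ := exists_V' _ hB _ hδ
    refine (iInf_le _ ⟨V', hV'⟩).trans ?_
    rw [EReal.coe_le_coe_iff]
    refine (key W hW QXX' hQ Qc hQc μ V V' hV hV').trans ?_
    have h5 : (r - s) / (μ + 1) * (μ + 1) = r - s := div_mul_cancel₀ _ (by linarith)
    have h6 := mul_le_mul_of_nonneg_left
      (show ∑ x, ∑ y, margXY3 (jointQ QXX' Qc) x y * Real.log (V x y)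
          - ∑ x', ∑ y, margX'Y3 (jointQ QXX' Qc) x' y * Real.log (V' x' y) ≤
          mutInf (margXY3 (jointQ QXX' Qc)) -
      mutInf (margX'Y3 (jointQ QXX' Qc)) + (r - s) / (μ + 1) by linarith) hμ
    linarith

end EE
end

section
/- (Appendix D, eqs. (D.5)–(D.13)) Let W be a channel from 𝒳 to 𝒴, let R be a real number, and let Q_{XX'} be a pmf on 𝒳 × 𝒳. Then Φ(Q_{XX'},R) ≥ sup_{μ ≥ 0} { μR + sup over strictly positive pmfs U on 𝒴 inf over strictly positive conditional pmfs U'(·|x') on 𝒴 of ( −∑_{x,x'} Q_{XX'}(x,x') log [ ∑_y W(y|x) U'(y|x')^{μ} U(y)^{−μ} ] ) }. -/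
open Real BigOperators Filter

namespace EE

variable {𝒳 𝒴 : Type*} [Fintype 𝒳] [Fintype 𝒴]

theorem aux_gibbs {α : Type*} [Fintype α] (p a : α → ℝ) (hp : IsPMF p) (ha : ∀ i, 0 < a i) :
    -Real.log (∑ i, a i) ≤ ∑ i, p i * (Real.log (p i) - Real.log (a i)) := by
  have hne : Nonempty α := by
    by_contra h
    rw [not_nonempty_iff] at h
    have := hp.2
    simp at this
  have hS : 0 < ∑ i, a i := Finset.sum_pos (fun i _ => ha i) Finset.univ_nonempty
  have key : ∀ i, p i - a i / (∑ i, a i) ≤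
      p i * (Real.log (p i) - Real.log (a i)) + p i * Real.log (∑ i, a i) := by
    intro i
    rcases (hp.1 i).eq_or_lt with h | h
    · rw [← h]
      have : 0 < a i / (∑ i, a i) := div_pos (ha i) hS
      simp only [zero_mul]; linarith
    · have h1 := Real.log_le_sub_one_of_pos (x := a i / (∑ i, a i) / p i)
        (div_pos (div_pos (ha i) hS) h)
      rw [Real.log_div (div_pos (ha i) hS).ne' h.ne', Real.log_div (ha i).ne' hS.ne'] at h1
      have h2 := mul_le_mul_of_nonneg_left h1 h.le
      have h3 : p i * (a i / (∑ i, a i) / p i - 1) = a i / (∑ i, a i) - p i := by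
        field_simp
      rw [h3] at h2
      linarith
  have h := Finset.sum_le_sum (fun i (_ : i ∈ Finset.univ) => key i)
  rw [Finset.sum_sub_distrib, Finset.sum_add_distrib, ← Finset.sum_div, div_self hS.ne', hp.2,
    ← Finset.sum_mul, hp.2] at h
  linarith

theorem aux_mutInf {𝒳 𝒴 : Type*} [Fintype 𝒳] [Fintype 𝒴] [Nonempty 𝒴]
    (q : 𝒳 → 𝒴 → ℝ) (hq : IsJointPMF q) (U : 𝒴 → ℝ) (hU : IsPosPMF U) (δ : ℝ) (hδ : 0 < δ) :
    ∃ U' : 𝒳 → 𝒴 → ℝ, (∀ x', IsPosPMF (U' x')) ∧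
      mutInf q ≤ (∑ x', ∑ y, q x' y * (Real.log (U' x' y) - Real.log (U y))) + δ := by
  classical
  set u : ℝ := 1 / (Fintype.card 𝒴 : ℝ) with hu
  have hc : (0 : ℝ) < Fintype.card 𝒴 := by exact_mod_cast Fintype.card_pos
  have hu0 : 0 < u := by positivity
  have hus : ∑ _y : 𝒴, u = 1 := by simp [hu, hc.ne']
  set e : ℝ := Real.exp (-δ) with he
  have he0 : 0 < e := Real.exp_pos _
  have he1 : e < 1 := by rw [he, Real.exp_lt_one_iff]; linarith
  set V : 𝒳 → 𝒴 → ℝ := fun x y => if margX q x = 0 then u else q x y / margX q x with hV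
  have hm : ∀ x, 0 ≤ margX q x := fun x => Finset.sum_nonneg (fun y _ => hq.1 x y)
  have hV0 : ∀ x y, 0 ≤ V x y := by
    intro x y
    simp only [hV]
    split_ifs
    · exact hu0.le
    · exact div_nonneg (hq.1 x y) (hm x)
  have hVs : ∀ x, ∑ y, V x y = 1 := by
    intro x
    simp only [hV]
    split_ifs with h
    · exact hus
    · rw [← Finset.sum_div]; exact div_self h
  refine ⟨fun x y => e * V x y + (1 - e) * u, fun x => ⟨fun y => ?_, ?_⟩, ?_⟩
  · have := mul_nonneg he0.le (hV0 x y)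
    have := mul_pos (sub_pos.2 he1) hu0
    show 0 < e * V x y + (1 - e) * u
    linarith
  · rw [Finset.sum_add_distrib, ← Finset.mul_sum, ← Finset.mul_sum, hVs, hus]; ring
  · have key : ∀ x y, q x y * Real.log (q x y / (margX q x * margY q y)) ≤
        q x y * (Real.log (e * V x y + (1 - e) * u) - Real.log (U y)) + q x y * δ
        - q x y * (Real.log (margY q y) - Real.log (U y)) := by
      intro x y
      rcases (hq.1 x y).eq_or_lt with h | h
      · rw [← h]; simp
      · have hx : 0 < margX q x := lt_of_lt_of_le h
          (Finset.single_le_sum (f := fun y => q x y) (fun y _ => hq.1 x y) (Finset.mem_univ y))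
        have hy : 0 < margY q y := lt_of_lt_of_le h
          (Finset.single_le_sum (f := fun x => q x y) (fun x _ => hq.1 x y) (Finset.mem_univ x))
        have hVe : V x y = q x y / margX q x := by simp only [hV]; rw [if_neg hx.ne']
        have hVp : 0 < V x y := by rw [hVe]; positivity
        have h1 : Real.log (e * V x y) ≤ Real.log (e * V x y + (1 - e) * u) := by
          apply Real.log_le_log (by positivity)
          have := mul_pos (sub_pos.2 he1) hu0
          linarith
        rw [Real.log_mul he0.ne' hVp.ne', he, Real.log_exp, ← he] at h1
        have h2 : q x y / (margX q x * margY q y) = V x y / margY q y := by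
          rw [hVe]; field_simp
        rw [h2, Real.log_div hVp.ne' hy.ne']
        have := mul_le_mul_of_nonneg_left h1 h.le
        linarith
    have hY : IsPMF (margY q) := by
      refine ⟨fun y => Finset.sum_nonneg (fun x _ => hq.1 x y), ?_⟩
      rw [← hq.2]; exact Finset.sum_comm
    have hg := aux_gibbs (margY q) U hY hU.1
    rw [hU.2, Real.log_one, neg_zero] at hg
    have hg2 : ∑ x, ∑ y, q x y * (Real.log (margY q y) - Real.log (U y)) =
        ∑ y, margY q y * (Real.log (margY q y) - Real.log (U y)) := by
      rw [Finset.sum_comm]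
      exact Finset.sum_congr rfl fun y _ => by rw [← Finset.sum_mul]; rfl
    have hd : ∑ x, ∑ y, q x y * δ = δ := by
      simp_rw [← Finset.sum_mul]; rw [hq.2, one_mul]
    have h := Finset.sum_le_sum (fun x (_ : x ∈ Finset.univ) =>
      Finset.sum_le_sum (fun y (_ : y ∈ Finset.univ) => key x y))
    simp only [Finset.sum_sub_distrib (f := fun y => _ + _), Finset.sum_sub_distrib (f := fun x => Finset.sum _ _), Finset.sum_add_distrib] at h
    rw [hd, hg2] at h
    unfold mutInf
    linarith

theorem aux_main {𝒳 𝒴 : Type*} [Fintype 𝒳] [Fintype 𝒴] [Nonempty 𝒴]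
    (W : 𝒳 → 𝒴 → ℝ) (hW : IsChannel W)
    (QXX' : 𝒳 → 𝒳 → ℝ) (hQ : IsJointPMF QXX') (μ : ℝ) (hμ : 0 ≤ μ)
    (U : 𝒴 → ℝ) (hU : IsPosPMF U)
    (Qc : 𝒳 → 𝒳 → 𝒴 → ℝ) (hQc : ∀ x x', IsPMF (Qc x x')) (δ : ℝ) (hδ : 0 < δ) :
    ∃ U' : 𝒳 → 𝒴 → ℝ, (∀ x', IsPosPMF (U' x')) ∧
      (-∑ x, ∑ x', QXX' x x' * Real.log (∑ y, W x y * U' x' y ^ μ * U y ^ (-μ))) ≤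
      obj W (jointQ QXX' Qc) - μ * mutInf (margX'Y3 (jointQ QXX' Qc)) + μ * δ := by
  have hq : IsJointPMF (margX'Y3 (jointQ QXX' Qc)) := by
    refine ⟨fun x' y => Finset.sum_nonneg fun x _ => mul_nonneg (hQ.1 _ _) ((hQc _ _).1 _), ?_⟩
    rw [← hQ.2, Finset.sum_comm (s := Finset.univ) (t := Finset.univ) (f := fun x x' => QXX' x x')]
    refine Finset.sum_congr rfl fun x' _ => ?_
    unfold margX'Y3 jointQ
    rw [Finset.sum_comm]
    refine Finset.sum_congr rfl fun x _ => ?_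
    rw [← Finset.mul_sum, (hQc x x').2, mul_one]
  obtain ⟨U', hU', hI⟩ := aux_mutInf _ hq U hU δ hδ
  refine ⟨U', hU', ?_⟩
  have hI2 := mul_le_mul_of_nonneg_left hI hμ
  have e1 : ∑ x', ∑ y, margX'Y3 (jointQ QXX' Qc) x' y * (Real.log (U' x' y) - Real.log (U y)) =
      ∑ x, ∑ x', ∑ y, QXX' x x' * Qc x x' y * (Real.log (U' x' y) - Real.log (U y)) := by
    rw [Finset.sum_comm (s := Finset.univ) (t := Finset.univ) (f := fun x x' => ∑ y, QXX' x x' * Qc x x' y * (Real.log (U' x' y) - Real.log (U y)))]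
    refine Finset.sum_congr rfl fun x' _ => ?_
    rw [Finset.sum_comm]
    refine Finset.sum_congr rfl fun y _ => ?_
    rw [← Finset.sum_mul]; rfl
  have e2 : obj W (jointQ QXX' Qc) =
      ∑ x, ∑ x', ∑ y, QXX' x x' * Qc x x' y * (Real.log (Qc x x' y) - Real.log (W x y)) := by
    unfold obj condEntY3 jointQ
    rw [sub_neg_eq_add, neg_add_eq_sub]
    simp only [← Finset.sum_sub_distrib]
    refine Finset.sum_congr rfl fun x _ => Finset.sum_congr rfl fun x' _ =>
      Finset.sum_congr rfl fun y _ => ?_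
    rw [← Finset.mul_sum, (hQc x x').2, mul_one]
    by_cases h : QXX' x x' = 0
    · simp [h]
    · rw [mul_div_cancel_left₀ _ h]; ring
  rw [e1] at hI2
  have key : ∀ x x', -(QXX' x x' * Real.log (∑ y, W x y * U' x' y ^ μ * U y ^ (-μ))) ≤
      (∑ y, QXX' x x' * Qc x x' y * (Real.log (Qc x x' y) - Real.log (W x y))) -
      μ * ∑ y, QXX' x x' * Qc x x' y * (Real.log (U' x' y) - Real.log (U y)) := by
    intro x x'
    have h := aux_gibbs (Qc x x') (fun y => W x y * U' x' y ^ μ * U y ^ (-μ)) (hQc x x')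
      (fun y => mul_pos (mul_pos ((hW x).1 y) (Real.rpow_pos_of_pos ((hU' x').1 y) _))
        (Real.rpow_pos_of_pos (hU.1 y) _))
    have h2 := mul_le_mul_of_nonneg_left h (hQ.1 x x')
    rw [mul_neg] at h2
    refine h2.trans (le_of_eq ?_)
    rw [Finset.mul_sum, Finset.mul_sum, ← Finset.sum_sub_distrib]
    refine Finset.sum_congr rfl fun y _ => ?_
    have hw := (hW x).1 y
    have hu' := (hU' x').1 y
    have hu := hU.1 y
    rw [Real.log_mul (mul_pos hw (Real.rpow_pos_of_pos hu' _)).ne' (Real.rpow_pos_of_pos hu _).ne',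
      Real.log_mul hw.ne' (Real.rpow_pos_of_pos hu' _).ne', Real.log_rpow hu', Real.log_rpow hu]
    ring
  have h := Finset.sum_le_sum (fun x (_ : x ∈ Finset.univ) =>
      Finset.sum_le_sum (fun x' (_ : x' ∈ Finset.univ) => key x x'))
  simp only [Finset.sum_sub_distrib, Finset.sum_neg_distrib, ← Finset.mul_sum] at h
  simp only [← Finset.sum_neg_distrib, ← Finset.mul_sum, Finset.sum_sub_distrib] at h hI2 e2 ⊢
  linarith

/-- **Appendix D, eqs. (D.5)–(D.13):** a sup-inf lower bound on `Φ(Q_{XX'},R)`. -/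
theorem Phi_lower_bound {𝒳 𝒴 : Type*} [Fintype 𝒳] [Fintype 𝒴]
    [Nonempty 𝒳] [Nonempty 𝒴]
    (W : 𝒳 → 𝒴 → ℝ) (hW : IsChannel W) (R : ℝ)
    (QXX' : 𝒳 → 𝒳 → ℝ) (hQ : IsJointPMF QXX') :
    Phi W QXX' R ≥
      ⨆ μ : {μ : ℝ // 0 ≤ μ},
        (((μ.1 * R : ℝ) : EReal) +
          ⨆ U : {U : 𝒴 → ℝ // IsPosPMF U},
            ⨅ U' : {U' : 𝒳 → 𝒴 → ℝ // ∀ x', IsPosPMF (U' x')},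
              ((-∑ x, ∑ x', QXX' x x' *
                Real.log (∑ y, W x y * U'.1 x' y ^ μ.1 * U.1 y ^ (-μ.1)) : ℝ) : EReal)) := by
  refine iSup_le fun μ => ?_
  unfold Phi
  refine le_iSup_of_le μ ?_
  refine le_iInf fun Qc => ?_
  have hmain : (⨆ U : {U : 𝒴 → ℝ // IsPosPMF U},
      ⨅ U' : {U' : 𝒳 → 𝒴 → ℝ // ∀ x', IsPosPMF (U' x')},
        ((-∑ x, ∑ x', QXX' x x' *
          Real.log (∑ y, W x y * U'.1 x' y ^ μ.1 * U.1 y ^ (-μ.1)) : ℝ) : EReal)) ≤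
      ((obj W (jointQ QXX' Qc.1) - μ.1 * mutInf (margX'Y3 (jointQ QXX' Qc.1)) : ℝ) : EReal) := by
    refine iSup_le fun U => ?_
    refine EReal.le_of_forall_lt_iff_le.1 fun z hz => ?_
    have hz' := EReal.coe_lt_coe_iff.1 hz
    set A := obj W (jointQ QXX' Qc.1) - μ.1 * mutInf (margX'Y3 (jointQ QXX' Qc.1)) with hA
    have hμ1 : 0 < μ.1 + 1 := by linarith [μ.2]
    obtain ⟨U', hU', hle⟩ := aux_main W hW QXX' hQ μ.1 μ.2 U.1 U.2 Qc.1 Qc.2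
      ((z - A) / (μ.1 + 1)) (div_pos (by linarith) hμ1)
    refine iInf_le_of_le ⟨U', hU'⟩ ?_
    refine EReal.coe_le_coe_iff.2 (hle.trans ?_)
    have h1 : μ.1 * ((z - A) / (μ.1 + 1)) ≤ (μ.1 + 1) * ((z - A) / (μ.1 + 1)) :=
      mul_le_mul_of_nonneg_right (by linarith) (div_nonneg (by linarith) hμ1.le)
    rw [mul_div_cancel₀ _ hμ1.ne'] at h1
    linarith
  refine (add_le_add le_rfl hmain).trans ?_
  rw [← EReal.coe_add]
  refine EReal.coe_le_coe_iff.2 (le_of_eq ?_)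
  ring

end EE
end

section
/- (Appendix D, eqs. (D.18)–(D.24)) Let W be a channel from 𝒳 to 𝒴, let Q_X be a strictly positive pmf on 𝒳, let R ≥ 0, and let Q_{XX'} be a pmf on 𝒳 × 𝒳. Then Θ(Q_{XX'},R) ≤ sup_{ρ ≥ 0} { ρR − ∑_{x,x'} Q_{XX'}(x,x') log [ ∑_y W(y|x) W(y|x')^{ρ} U*(y)^{−ρ} ] }, where U*(y) = ∑_x W(y|x) Q_X(x). -/
open Real BigOperators Filter

namespace EE

variable {𝒳 𝒴 : Type*} [Fintype 𝒳] [Fintype 𝒴]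

lemma hasDerivAt_logZ {𝒳 : Type*} [Fintype 𝒳] (QX : 𝒳 → ℝ) (hQX : IsPosPMF QX) :
    HasDerivAt (fun t : ℝ => Real.log (∑ x, QX x ^ (1 - t))) (ent QX) 0 := by
  have h1 : ∀ x ∈ (Finset.univ : Finset 𝒳), HasDerivAt (fun t : ℝ => QX x ^ (1 - t))
      (-(QX x * Real.log (QX x))) 0 := by
    intro x _
    have h := ((hasDerivAt_id (0:ℝ)).const_sub 1).const_rpow (hQX.1 x)
    simp only [id, sub_zero, Real.rpow_one] at h
    convert h using 1
    ring
  have h2 := HasDerivAt.fun_sum h1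
  have h3 := h2.log (by simp [hQX.2])
  simp only [sub_zero, Real.rpow_one, hQX.2, div_one] at h3
  simpa [ent] using h3

lemma tendsto_logZ {𝒳 : Type*} [Fintype 𝒳] (QX : 𝒳 → ℝ) (hQX : IsPosPMF QX) :
    Tendsto (fun t : ℝ => t⁻¹ * Real.log (∑ x, QX x ^ (1 - t))) (nhdsWithin 0 (Set.Ioi 0))
      (nhds (ent QX)) := by
  have h := (hasDerivAt_logZ QX hQX).tendsto_slope_zero_right
  simpa [hQX.2] using h

lemma key_eq {𝒳 𝒴 : Type*} [Fintype 𝒳] [Fintype 𝒴] [Nonempty 𝒳] [Nonempty 𝒴]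
    (W : 𝒳 → 𝒴 → ℝ) (hW : IsChannel W)
    (QX : 𝒳 → ℝ) (hQX : IsPosPMF QX) (R : ℝ)
    (QXX' : 𝒳 → 𝒳 → ℝ) (hQ : IsJointPMF QXX') (ρ t Z : ℝ) (ht : 0 < t) (hZ : 0 < Z) :
    ρ * 1 * (R - ent QX) - ∑ x, ∑ x', QXX' x x' *
      Real.log (∑ y, W x y * W x' y ^ ρ *
        Gfun W QX y 1 t⁻¹ (fun x => QX x ^ (1 - t) / Z) ^ (-ρ)) =
    (ρ * R - ∑ x, ∑ x', QXX' x x' *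
          Real.log (∑ y, W x y * W x' y ^ ρ *
            (∑ x'', W x'' y * QX x'') ^ (-ρ))) + ρ * (t⁻¹ * Real.log Z - ent QX) := by
  have hU : ∀ y, 0 < ∑ x'', W x'' y * QX x'' := fun y =>
    Finset.sum_pos (fun x _ => mul_pos ((hW x).1 y) (hQX.1 x)) Finset.univ_nonempty
  have hG : ∀ y, Gfun W QX y 1 t⁻¹ (fun x => QX x ^ (1 - t) / Z) =
      Z ^ t⁻¹ * ∑ x'', W x'' y * QX x'' := by
    intro y
    simp only [Gfun, div_one, Real.rpow_one, Finset.mul_sum]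
    refine Finset.sum_congr rfl fun x _ => ?_
    have hq := hQX.1 x
    rw [Real.div_rpow (by positivity) hZ.le, ← Real.rpow_mul hq.le, Real.rpow_neg hZ.le,
      div_inv_eq_mul]
    have : QX x ^ t⁻¹ * QX x ^ ((1 - t) * -t⁻¹) = QX x := by
      rw [← Real.rpow_add hq]
      have : t⁻¹ + (1 - t) * -t⁻¹ = 1 := by field_simp; ring
      rw [this, Real.rpow_one]
    calc _ = W x y * (QX x ^ t⁻¹ * QX x ^ ((1 - t) * -t⁻¹)) * Z ^ t⁻¹ := by ring
      _ = _ := by rw [this]; ring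
  have hL : ∀ x x', Real.log (∑ y, W x y * W x' y ^ ρ *
        Gfun W QX y 1 t⁻¹ (fun x => QX x ^ (1 - t) / Z) ^ (-ρ)) =
      -ρ * (t⁻¹ * Real.log Z) + Real.log (∑ y, W x y * W x' y ^ ρ *
            (∑ x'', W x'' y * QX x'') ^ (-ρ)) := by
    intro x x'
    have hS : 0 < ∑ y, W x y * W x' y ^ ρ * (∑ x'', W x'' y * QX x'') ^ (-ρ) :=
      Finset.sum_pos (fun y _ => mul_pos (mul_pos ((hW x).1 y)
        (Real.rpow_pos_of_pos ((hW x').1 y) _)) (Real.rpow_pos_of_pos (hU y) _))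
        Finset.univ_nonempty
    have hp : 0 < Z ^ t⁻¹ := Real.rpow_pos_of_pos hZ _
    have : (∑ y, W x y * W x' y ^ ρ *
        Gfun W QX y 1 t⁻¹ (fun x => QX x ^ (1 - t) / Z) ^ (-ρ)) =
        (Z ^ t⁻¹) ^ (-ρ) * ∑ y, W x y * W x' y ^ ρ * (∑ x'', W x'' y * QX x'') ^ (-ρ) := by
      rw [Finset.mul_sum]
      refine Finset.sum_congr rfl fun y _ => ?_
      rw [hG, Real.mul_rpow hp.le (hU y).le]
      ring
    rw [this, Real.log_mul (Real.rpow_pos_of_pos hp _).ne' hS.ne', Real.log_rpow hp,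
      Real.log_rpow hZ]
  simp only [hL, mul_add, Finset.sum_add_distrib, ← Finset.sum_mul, hQ.2]
  ring

/-- **Appendix D, eqs. (D.18)–(D.24):** an upper bound on `Θ(Q_{XX'},R)` in terms of the
output distribution `U*(y) = ∑_x W(y|x) Q_X(x)`. -/
theorem Theta_upper_bound {𝒳 𝒴 : Type*} [Fintype 𝒳] [Fintype 𝒴]
    [Nonempty 𝒳] [Nonempty 𝒴]
    (W : 𝒳 → 𝒴 → ℝ) (hW : IsChannel W)
    (QX : 𝒳 → ℝ) (hQX : IsPosPMF QX) (R : ℝ) (hR : 0 ≤ R)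
    (QXX' : 𝒳 → 𝒳 → ℝ) (hQ : IsJointPMF QXX') :
    Theta W QX QXX' R ≤
      ⨆ ρ : {ρ : ℝ // 0 ≤ ρ},
        ((ρ.1 * R - ∑ x, ∑ x', QXX' x x' *
          Real.log (∑ y, W x y * W x' y ^ ρ.1 *
            (∑ x'', W x'' y * QX x'') ^ (-ρ.1)) : ℝ) : EReal) := by
  unfold Theta
  refine iSup_mono fun ρ => ?_
  set L : ℝ := ρ.1 * R - ∑ x, ∑ x', QXX' x x' *
          Real.log (∑ y, W x y * W x' y ^ ρ.1 *
            (∑ x'', W x'' y * QX x'') ^ (-ρ.1)) with hL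
  have hlim : Tendsto (fun t : ℝ => ((L + ρ.1 * (t⁻¹ * Real.log (∑ x, QX x ^ (1 - t))
      - ent QX) : ℝ) : EReal)) (nhdsWithin 0 (Set.Ioi 0)) (nhds (L : EReal)) := by
    have h := (((tendsto_logZ QX hQX).sub_const (ent QX)).const_mul ρ.1).const_add L
    simp only [sub_self, mul_zero, add_zero] at h
    exact (continuous_coe_real_ereal.tendsto L).comp h
  refine ge_of_tendsto hlim ?_
  filter_upwards [self_mem_nhdsWithin] with t ht
  have ht : 0 < t := ht
  have hZ : 0 < ∑ x, QX x ^ (1 - t) :=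
    Finset.sum_pos (fun x _ => Real.rpow_pos_of_pos (hQX.1 x) _) Finset.univ_nonempty
  refine (iInf_le _ (⟨1, one_pos⟩ : {σ : ℝ // 0 < σ})).trans ?_
  refine (iInf_le _ (⟨t⁻¹, (inv_pos.2 ht).le⟩ : {τ : ℝ // 0 ≤ τ})).trans ?_
  refine (iInf_le _ (⟨fun x => QX x ^ (1 - t) / ∑ x, QX x ^ (1 - t),
    fun x => div_pos (Real.rpow_pos_of_pos (hQX.1 x) _) hZ,
    by rw [← Finset.sum_div, div_self hZ.ne']⟩ : {V : 𝒳 → ℝ // IsPosPMF V})).trans ?_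
  exact (congrArg _ (key_eq W hW QX hQX R QXX' hQ ρ.1 t _ ht hZ)).le

end EE
end
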